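/- Let Θ be a real symplectic 2n×2n matrix acting ℂ-linearly on ℂ^{2n} and α ∈ ℂ with |α| = 1, α ≠ 1. Then the Lagrangian subspaces Γ(Θ) and Γ(αΘ) of (ℂ^{2n} × ℂ^{2n}, (−σ_ℂ) ⊕ σ_ℂ) are transversal, the Maslov form m(Γ(Θ), Π², Γ(αΘ)) (defined on the 2n-dimensional space Π²) has zero signature and kernel of complex dimension 2·dim_ℂ(Θ(Π) ∩ Π), and consequently i(Γ(Θ), Π², Γ(αΘ)) = n − dim_ℂ(Θ(Π) ∩ Π). -/

import Mathlib

open scoped ComplexOrder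

noncomputable section

/-- `ℂ^{2n}`, written with coordinates indexed by `Fin n ⊕ Fin n`
(first block = `q`-coordinates, second block = `p`-coordinates). -/
abbrev CV (n : ℕ) := (Fin n ⊕ Fin n) → ℂ

/-- The sesquilinear extension `σ_ℂ(X,Y) = σ(X̄,Y)` of the standard symplectic form
`σ(x,y) = ⟨Jx,y⟩`, `J = [[0,−I],[I,0]]`, to `ℂ^{2n}` (conjugate-linear in the first
argument). -/
def sigmaC (n : ℕ) : CV n →ₛₗ[starRingEnd ℂ] CV n →ₗ[ℂ] ℂ :=
  LinearMap.mk₂'ₛₗ (starRingEnd ℂ) (RingHom.id ℂ)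
    (fun x y => (∑ i : Fin n, (starRingEnd ℂ) (x (Sum.inl i)) * y (Sum.inr i)) -
      ∑ i : Fin n, (starRingEnd ℂ) (x (Sum.inr i)) * y (Sum.inl i))
    (by intro x x' y; simp [add_mul, Finset.sum_add_distrib]; ring)
    (by
      intro c x y
      simp only [Pi.smul_apply, smul_eq_mul, map_mul]
      rw [mul_sub, Finset.mul_sum, Finset.mul_sum]
      congr 1 <;> exact Finset.sum_congr rfl (by intros; ring))
    (by intro x y y'; simp [mul_add, Finset.sum_add_distrib]; ring)
    (by
      intro c x y
      simp only [Pi.smul_apply, smul_eq_mul, RingHom.id_apply]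
      rw [mul_sub, Finset.mul_sum, Finset.mul_sum]
      congr 1 <;> exact Finset.sum_congr rfl (by intros; ring))

/-- The orthogonal of a subspace with respect to a sesquilinear form. -/
def sesqOrth {W : Type*} [AddCommGroup W] [Module ℂ W]
    (f : W →ₛₗ[starRingEnd ℂ] W →ₗ[ℂ] ℂ) (L : Submodule ℂ W) : Submodule ℂ W where
  carrier := {u | ∀ w ∈ L, f u w = 0}
  add_mem' := by
    intro a b ha hb w hw
    simp [map_add, ha w hw, hb w hw]
  zero_mem' := by
    intro w hw
    simp
  smul_mem' := by
    intro c u hu w hw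
    simp [LinearMap.map_smulₛₗ, hu w hw]

/-- A complex subspace is Lagrangian for a sesquilinear form when it coincides with its
orthogonal. -/
def IsLagrangianC {W : Type*} [AddCommGroup W] [Module ℂ W]
    (f : W →ₛₗ[starRingEnd ℂ] W →ₗ[ℂ] ℂ) (L : Submodule ℂ W) : Prop :=
  L = sesqOrth f L

/-- Negative inertia index of the (Hermitian) Maslov form of a triple of complex
Lagrangian subspaces: the supremum of complex dimensions of subspaces of
`L1 ∩ (L0 + L2)` on which `m(l1) = σ_ℂ(l0,l2)` is negative definite (negativity in the
complex order: real and `< 0`). -/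
def maslovIndexC {W : Type*} [AddCommGroup W] [Module ℂ W]
    (f : W →ₛₗ[starRingEnd ℂ] W →ₗ[ℂ] ℂ) (L0 L1 L2 : Submodule ℂ W) : ℕ :=
  sSup {d : ℕ | ∃ S : Submodule ℂ W, S ≤ L1 ⊓ (L0 ⊔ L2) ∧
    (∀ v ∈ S, v ≠ 0 → ∀ l0 ∈ L0, ∀ l2 ∈ L2, v = l0 + l2 → f l0 l2 < 0) ∧
    Module.finrank ℂ ↥S = d}

/-- The direct sum of two sesquilinear forms on a product space. -/
def sesqProd {W1 W2 : Type*} [AddCommGroup W1] [Module ℂ W1] [AddCommGroup W2] [Module ℂ W2]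
    (f : W1 →ₛₗ[starRingEnd ℂ] W1 →ₗ[ℂ] ℂ) (g : W2 →ₛₗ[starRingEnd ℂ] W2 →ₗ[ℂ] ℂ) :
    (W1 × W2) →ₛₗ[starRingEnd ℂ] (W1 × W2) →ₗ[ℂ] ℂ :=
  LinearMap.mk₂'ₛₗ (starRingEnd ℂ) (RingHom.id ℂ)
    (fun x y => f x.1 y.1 + g x.2 y.2)
    (by intro x x' y; simp [map_add]; ring)
    (by intro c x y; simp [LinearMap.map_smulₛₗ, smul_eq_mul, mul_add])
    (by intro x y y'; simp [map_add]; ring)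
    (by intro c x y; simp [smul_eq_mul, mul_add])

/-- The direct sum of `k` copies of a sesquilinear form. -/
def sesqPi {W : Type*} [AddCommGroup W] [Module ℂ W] (k : ℕ)
    (f : W →ₛₗ[starRingEnd ℂ] W →ₗ[ℂ] ℂ) :
    (Fin k → W) →ₛₗ[starRingEnd ℂ] (Fin k → W) →ₗ[ℂ] ℂ :=
  LinearMap.mk₂'ₛₗ (starRingEnd ℂ) (RingHom.id ℂ)
    (fun x y => ∑ i, f (x i) (y i))
    (by intro x x' y; simp [map_add, Finset.sum_add_distrib])
    (by intro c x y; simp [LinearMap.map_smulₛₗ, Finset.mul_sum])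
    (by intro x y y'; simp [map_add, Finset.sum_add_distrib])
    (by intro c x y; simp [Finset.mul_sum])

/-- The vertical Lagrangian subspace `Π = {(p,0)} ⊂ ℂ^{2n}`. -/
def PiV (n : ℕ) : Submodule ℂ (CV n) where
  carrier := {x | ∀ i, x (Sum.inr i) = 0}
  add_mem' := by intro a b ha hb i; simp [ha i, hb i]
  zero_mem' := by intro i; simp
  smul_mem' := by intro c x hx i; simp [hx i]

/-- The standard symplectic matrix `J = [[0,−I],[I,0]]`. -/
def symplJ (n : ℕ) : Matrix (Fin n ⊕ Fin n) (Fin n ⊕ Fin n) ℝ :=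
  Matrix.fromBlocks 0 (-1) 1 0

/-- The `ℂ`-linear action on `ℂ^{2n}` of a real `2n×2n` matrix. -/
def cAction {n : ℕ} (Θ : Matrix (Fin n ⊕ Fin n) (Fin n ⊕ Fin n) ℝ) : CV n →ₗ[ℂ] CV n :=
  (Θ.map (Complex.ofReal)).mulVecLin


/-- The form `(−σ_ℂ) ⊕ σ_ℂ` on `ℂ^{2n} × ℂ^{2n}`. -/
def sigma2C (n : ℕ) :
    (CV n × CV n) →ₛₗ[starRingEnd ℂ] (CV n × CV n) →ₗ[ℂ] ℂ :=
  sesqProd (-(sigmaC n)) (sigmaC n)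

/-- The form `(−σ_ℂ)^{⊕k} ⊕ σ_ℂ^{⊕k}` on `Σ^k × Σ^k`, `Σ = ℂ^{2n}`. -/
def bigSigmaC (n k : ℕ) :
    ((Fin k → CV n) × (Fin k → CV n)) →ₛₗ[starRingEnd ℂ]
      ((Fin k → CV n) × (Fin k → CV n)) →ₗ[ℂ] ℂ :=
  sesqProd (-(sesqPi k (sigmaC n))) (sesqPi k (sigmaC n))

/-- The Lagrangian subspace `Π² = Π × Π` of `ℂ^{2n} × ℂ^{2n}`. -/
def Pi2Sub (n : ℕ) : Submodule ℂ (CV n × CV n) := (PiV n).prod (PiV n)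

/-- The diagonal Lagrangian subspace `Δ = {(ξ,ξ)}` of `ℂ^{2n} × ℂ^{2n}`. -/
def DiaSub (n : ℕ) : Submodule ℂ (CV n × CV n) :=
  LinearMap.graph (LinearMap.id : CV n →ₗ[ℂ] CV n)

/-- The Lagrangian subspace `Π^{2k} = Π × ⋯ × Π` of `Σ^k × Σ^k`. -/
def Pi2kSub (n k : ℕ) : Submodule ℂ ((Fin k → CV n) × (Fin k → CV n)) :=
  (Submodule.pi Set.univ fun _ : Fin k => PiV n).prod
    (Submodule.pi Set.univ fun _ : Fin k => PiV n)

/-- The graph `Γ = {(ξ1,…,ξk,Θξ1,…,Θξk)}` of the diagonal action of `Θ` on `Σ^k`. -/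
def GamSub (n k : ℕ) (Θ : Matrix (Fin n ⊕ Fin n) (Fin n ⊕ Fin n) ℝ) :
    Submodule ℂ ((Fin k → CV n) × (Fin k → CV n)) :=
  LinearMap.graph (LinearMap.pi fun i : Fin k => (cAction Θ).comp (LinearMap.proj i))

/-- The graph `Δ^↺ = {(ξ1,…,ξk,ξ2,…,ξk,ξ1)}` of the cyclic shift on `Σ^k`. -/
def DcycSub (n k : ℕ) [NeZero k] : Submodule ℂ ((Fin k → CV n) × (Fin k → CV n)) :=
  LinearMap.graph (LinearMap.funLeft ℂ (CV n) (fun i : Fin k => i + 1))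

/-- Positive inertia index of the Hermitian Maslov form of a triple of complex
Lagrangian subspaces. -/
def maslovPosIndexC {W : Type*} [AddCommGroup W] [Module ℂ W]
    (f : W →ₛₗ[starRingEnd ℂ] W →ₗ[ℂ] ℂ) (L0 L1 L2 : Submodule ℂ W) : ℕ :=
  sSup {d : ℕ | ∃ S : Submodule ℂ W, S ≤ L1 ⊓ (L0 ⊔ L2) ∧
    (∀ v ∈ S, v ≠ 0 → ∀ l0 ∈ L0, ∀ l2 ∈ L2, v = l0 + l2 → 0 < f l0 l2) ∧
    Module.finrank ℂ ↥S = d}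

/-!
The graphs of `T` and `αT` are isotropic for `(-ω) ⊕ ω` and, as `α ≠ 1`, transversal, so the Maslov
form of `(Γ(T), Λ × Λ, Γ(αT))` is a Hermitian form on `Λ × Λ`. Since `Λ × Λ` is Lagrangian, its
kernel is the direct sum of the intersections of `Λ × Λ` with the two graphs, each of which is
isomorphic to `T(Λ) ∩ Λ`. Solving `(1 - α) T a = y - α T x` for the component `(a, T a)` of `(x, y)`
along `Γ(T)` gives
`m((x, y), (x', y')) = conj (1 - α)⁻¹ * ω (y - α T x) (y' - T x')`.
As `Λ` and `T(Λ)` are isotropic, only the terms mixing first and second components contribute to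
`m((x, y), (x, y))`, so `(x, y) ↦ (-x, y)` carries `m` to `-m` and the signature vanishes.
Sylvester's law of inertia then yields `2 i + 2 dim (T(Λ) ∩ Λ) = 2 dim Λ`.
-/

section Inertia

variable {𝕜 V V' : Type*} [RCLike 𝕜] [AddCommGroup V] [Module 𝕜 V] [AddCommGroup V'] [Module 𝕜 V']
  {B : V →ₗ⋆[𝕜] V →ₗ[𝕜] 𝕜} {B' : V' →ₗ⋆[𝕜] V' →ₗ[𝕜] 𝕜} {P Q N S : Submodule 𝕜 V}

/-- Positive definiteness of a sesquilinear form on a subspace; negative definiteness of `B` is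
`IsPosDefOn (-B)`. The order on `𝕜` forces the values `B v v` to be real. -/
def IsPosDefOn (B : V →ₗ⋆[𝕜] V →ₗ[𝕜] 𝕜) (S : Submodule 𝕜 V) : Prop :=
  ∀ v ∈ S, v ≠ 0 → 0 < B v v

/-- The positive index of inertia of a Hermitian form; the negative index of `B` is
`posIndex (-B)`. The supremum is a junk value if the dimensions are unbounded. -/
def posIndex (B : V →ₗ⋆[𝕜] V →ₗ[𝕜] 𝕜) : ℕ :=
  sSup {d | ∃ S : Submodule 𝕜 V, IsPosDefOn B S ∧ Module.finrank 𝕜 S = d}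

lemma isGreatest_posIndex [FiniteDimensional 𝕜 V] (B : V →ₗ⋆[𝕜] V →ₗ[𝕜] 𝕜) :
    IsGreatest {d | ∃ S : Submodule 𝕜 V, IsPosDefOn B S ∧ Module.finrank 𝕜 S = d}
      (posIndex B) := by
  have bounded : BddAbove {d | ∃ S : Submodule 𝕜 V, IsPosDefOn B S ∧ Module.finrank 𝕜 S = d} :=
    ⟨Module.finrank 𝕜 V, by rintro _ ⟨S, -, rfl⟩; exact S.finrank_le⟩
  refine ⟨Nat.sSup_mem ⟨0, ⊥, ?_, finrank_bot 𝕜 V⟩ bounded, fun _ hd => le_csSup bounded hd⟩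
  exact fun v hv hv0 => absurd ((Submodule.mem_bot 𝕜).1 hv) hv0

lemma IsPosDefOn.finrank_le_posIndex [FiniteDimensional 𝕜 V] (hS : IsPosDefOn B S) :
    Module.finrank 𝕜 S ≤ posIndex B :=
  (isGreatest_posIndex B).2 ⟨S, hS, rfl⟩

lemma exists_isPosDefOn_finrank_eq_posIndex [FiniteDimensional 𝕜 V]
    (B : V →ₗ⋆[𝕜] V →ₗ[𝕜] 𝕜) :
    ∃ S : Submodule 𝕜 V, IsPosDefOn B S ∧ Module.finrank 𝕜 S = posIndex B :=
  (isGreatest_posIndex B).1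

lemma IsPosDefOn.disjoint (hP : IsPosDefOn B P) (hN : ∀ v ∈ N, B v v ≤ 0) : Disjoint P N :=
  Submodule.disjoint_def.2 fun v hvP hvN =>
    by_contra fun hv => (hP v hvP hv).not_ge (hN v hvN)

lemma IsPosDefOn.nonneg (hP : IsPosDefOn B P) {v : V} (hv : v ∈ P) : 0 ≤ B v v := by
  rcases eq_or_ne v 0 with rfl | h
  · simp
  · exact (hP v hv h).le

lemma IsPosDefOn.map {φ : V →ₗ[𝕜] V'} (hφ : ∀ v, B' (φ v) (φ v) = B v v)
    (hS : IsPosDefOn B S) : IsPosDefOn B' (S.map φ) := by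
  rintro _ ⟨v, hv, rfl⟩ hne
  rw [hφ]
  exact hS v hv fun h => hne (by rw [h, map_zero])

lemma posIndex_le_of_injective [FiniteDimensional 𝕜 V] [FiniteDimensional 𝕜 V']
    {φ : V →ₗ[𝕜] V'} (hφ : Function.Injective φ) (h : ∀ v, B' (φ v) (φ v) = B v v) :
    posIndex B ≤ posIndex B' := by
  obtain ⟨S, hS, hdim⟩ := exists_isPosDefOn_finrank_eq_posIndex B
  rw [← hdim, (S.equivMapOfInjective φ hφ).finrank_eq]
  exact (hS.map h).finrank_le_posIndex

lemma posIndex_neg_eq_of_anti_isometry [FiniteDimensional 𝕜 V] {φ : V →ₗ[𝕜] V}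
    (hφ : Function.Injective φ) (h : ∀ v, B (φ v) (φ v) = -B v v) :
    posIndex (-B) = posIndex B :=
  le_antisymm (posIndex_le_of_injective hφ fun v => by simp [h])
    (posIndex_le_of_injective hφ fun v => by simp [h])

lemma finrank_le_finrank_add_finrank_orthogonalBilin [FiniteDimensional 𝕜 V]
    (B : V →ₗ⋆[𝕜] V →ₗ[𝕜] 𝕜) (S : Submodule 𝕜 V) :
    Module.finrank 𝕜 V ≤ Module.finrank 𝕜 S + Module.finrank 𝕜 (S.orthogonalBilin B) := by
  let b := Module.finBasis 𝕜 S
  let φ : V →ₗ[𝕜] (Fin (Module.finrank 𝕜 S) → 𝕜) := LinearMap.pi fun i => B (b i)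
  have ker_le : LinearMap.ker φ ≤ S.orthogonalBilin B := by
    intro w hw s hs
    have pairing_eq_zero : (B.flip w).comp S.subtype = 0 :=
      b.ext fun i => congrFun (LinearMap.mem_ker.1 hw) i
    exact LinearMap.congr_fun pairing_eq_zero ⟨s, hs⟩
  calc Module.finrank 𝕜 V
      = Module.finrank 𝕜 (LinearMap.range φ) + Module.finrank 𝕜 (LinearMap.ker φ) :=
        φ.finrank_range_add_finrank_ker.symm
    _ ≤ Module.finrank 𝕜 S + Module.finrank 𝕜 (S.orthogonalBilin B) := by
        gcongr
        · exact (Submodule.finrank_le _).trans (Module.finrank_fin_fun 𝕜).le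
        · exact Submodule.finrank_mono ker_le

lemma IsPosDefOn.isCompl_orthogonalBilin [FiniteDimensional 𝕜 V] (hP : IsPosDefOn B P) :
    IsCompl P (P.orthogonalBilin B) := by
  have disj : Disjoint P (P.orthogonalBilin B) := Submodule.disjoint_def.2 fun v hvP hv =>
    by_contra fun hv0 => (hP v hvP hv0).ne' (hv v hvP)
  exact (Submodule.isCompl_iff_disjoint P _
    (finrank_le_finrank_add_finrank_orthogonalBilin B P)).2 disj

lemma IsPosDefOn.sup (hB : B.IsSymm) (hP : IsPosDefOn B P) (hQ : IsPosDefOn B Q)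
    (hPQ : ∀ p ∈ P, ∀ q ∈ Q, B p q = 0) : IsPosDefOn B (P ⊔ Q) := by
  intro v hv hv0
  obtain ⟨p, hp, q, hq, rfl⟩ := Submodule.mem_sup.1 hv
  have expand : B (p + q) (p + q) = B p p + B q q := by
    simp [hPQ p hp q hq, hB.eq_iff.1 (hPQ p hp q hq)]
  rw [expand]
  rcases eq_or_ne p 0 with rfl | hp0
  · simpa using hQ q hq (by simpa using hv0)
  · exact add_pos_of_pos_of_nonneg (hP p hp hp0) (hQ.nonneg hq)

lemma isPosDefOn_span_singleton {x : V} (hx : 0 < B x x) : IsPosDefOn B (𝕜 ∙ x) := by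
  intro v hv hv0
  obtain ⟨c, rfl⟩ := Submodule.mem_span_singleton.1 hv
  have hc : c ≠ 0 := by rintro rfl; simp at hv0
  have scale : B (c • x) (c • x) = ((‖c‖ ^ 2 : ℝ) : 𝕜) * B x x := by
    rw [map_smul, LinearMap.map_smulₛₗ, LinearMap.smul_apply, smul_eq_mul, smul_eq_mul,
      ← mul_assoc, RCLike.mul_conj, RCLike.ofReal_pow]
  rw [scale]
  have : 0 < ‖c‖ := norm_pos_iff.2 hc
  exact mul_pos (by exact_mod_cast (by positivity)) hx

lemma nonpos_on_orthogonalBilin_of_finrank_eq_posIndex [FiniteDimensional 𝕜 V] (hB : B.IsSymm)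
    (hP : IsPosDefOn B P) (hdim : Module.finrank 𝕜 P = posIndex B) {x : V}
    (hx : x ∈ P.orthogonalBilin B) : B x x ≤ 0 := by
  by_contra hpos
  have hx_pos : 0 < B x x := by
    obtain ⟨r, hr⟩ := RCLike.conj_eq_iff_real.1 (hB.eq x x)
    rw [hr] at hpos ⊢
    exact_mod_cast not_le.1 (by exact_mod_cast hpos)
  have orthogonal : ∀ p ∈ P, ∀ q ∈ 𝕜 ∙ x, B p q = 0 := by
    intro p hp q hq
    obtain ⟨c, rfl⟩ := Submodule.mem_span_singleton.1 hq
    rw [map_smul, show B p x = 0 from hx p hp, smul_zero]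
  have hxP : x ∉ P := fun h => hx_pos.ne' (hx x h)
  have bigger : P < P ⊔ 𝕜 ∙ x :=
    left_lt_sup.2 fun h => hxP (h (Submodule.mem_span_singleton_self x))
  have := (hP.sup hB (isPosDefOn_span_singleton hx_pos) orthogonal).finrank_le_posIndex
  exact ((Submodule.finrank_lt_finrank_of_lt bigger).trans_le this).ne hdim

lemma apply_eq_zero_of_nonneg_on (hB : B.IsSymm) (hS : ∀ v ∈ S, 0 ≤ B v v) {x y : V}
    (hx : x ∈ S) (hy : y ∈ S) (hxx : B x x = 0) : B x y = 0 := by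
  let core : PreInnerProductSpace.Core 𝕜 S :=
    { inner := fun v w => B v w
      conj_inner_symm := fun v w => hB.eq w v
      re_inner_nonneg := fun v => (RCLike.nonneg_iff.1 (hS v v.2)).1
      add_left := fun u v w => by simp
      smul_left := fun v w c => by simp [LinearMap.map_smulₛₗ] }
  have cauchy_schwarz : ‖B x y‖ * ‖B y x‖ ≤ RCLike.re (B x x) * RCLike.re (B y y) :=
    InnerProductSpace.Core.inner_mul_inner_self_le (⟨x, hx⟩ : S) ⟨y, hy⟩
  rw [hxx, map_zero, zero_mul, ← hB.eq x y, RCLike.norm_conj] at cauchy_schwarz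
  exact norm_eq_zero.1 (mul_self_eq_zero.1 (cauchy_schwarz.antisymm (by positivity)))

lemma finrank_le_posIndex_add_posIndex_neg_add_finrank_ker [FiniteDimensional 𝕜 V]
    (hB : B.IsSymm) :
    Module.finrank 𝕜 V
      ≤ posIndex B + posIndex (-B) + Module.finrank 𝕜 (LinearMap.ker B) := by
  obtain ⟨P, hP, hdim⟩ := exists_isPosDefOn_finrank_eq_posIndex B
  obtain ⟨C, hC⟩ := Submodule.exists_isCompl (LinearMap.ker B)
  set R := P.orthogonalBilin B
  have hR : ∀ v ∈ R, 0 ≤ (-B) v v := fun v hv => by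
    simpa using nonpos_on_orthogonalBilin_of_finrank_eq_posIndex hB hP hdim hv
  have null_mem_ker : ∀ v ∈ R, B v v = 0 → v ∈ LinearMap.ker B := by
    intro v hv hvv
    ext w
    obtain ⟨p, hp, s, hs, rfl⟩ :=
      Submodule.mem_sup.1 (hP.isCompl_orthogonalBilin.sup_eq_top ▸ Submodule.mem_top : w ∈ P ⊔ R)
    have hvp : B v p = 0 := hB.eq_iff.1 (hv p hp)
    have hvs : B v s = 0 := by
      simpa using apply_eq_zero_of_nonneg_on (B := -B) ⟨by simp [hB.eq]⟩ hR hv hs (by simp [hvv])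
    simp [hvp, hvs]
  have negDef : IsPosDefOn (-B) (R ⊓ C) := fun v hv hv0 =>
    (hR v hv.1).lt_of_ne fun h0 => hv0 <| Submodule.disjoint_def.1 hC.disjoint v
      (null_mem_ker v hv.1 (by simpa using h0.symm)) hv.2
  have dim_R : Module.finrank 𝕜 P + Module.finrank 𝕜 R = Module.finrank 𝕜 V :=
    Submodule.finrank_add_eq_of_isCompl hP.isCompl_orthogonalBilin
  have dim_C := Submodule.finrank_add_eq_of_isCompl hC
  have dim_inf := Submodule.finrank_sup_add_finrank_inf_eq R C
  have dim_sup := (R ⊔ C).finrank_le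
  have := negDef.finrank_le_posIndex
  omega

/-- Sylvester's law of inertia for Hermitian forms. -/
theorem posIndex_add_posIndex_neg_add_finrank_ker [FiniteDimensional 𝕜 V] (hB : B.IsSymm) :
    posIndex B + posIndex (-B) + Module.finrank 𝕜 (LinearMap.ker B) = Module.finrank 𝕜 V := by
  refine le_antisymm ?_ (finrank_le_posIndex_add_posIndex_neg_add_finrank_ker hB)
  obtain ⟨P, hP, dim_P⟩ := exists_isPosDefOn_finrank_eq_posIndex B
  obtain ⟨Q, hQ, dim_Q⟩ := exists_isPosDefOn_finrank_eq_posIndex (-B)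
  have P_ker : Disjoint P (LinearMap.ker B) :=
    hP.disjoint fun v hv => by simp [LinearMap.mem_ker.1 hv]
  have Q_sup : Disjoint Q (P ⊔ LinearMap.ker B) := by
    refine hQ.disjoint fun v hv => ?_
    obtain ⟨p, hp, k, hk, rfl⟩ := Submodule.mem_sup.1 hv
    have hk' : ∀ w, B k w = 0 := LinearMap.congr_fun (LinearMap.mem_ker.1 hk)
    simpa [hk', hB.eq_iff.1 (hk' p)] using hP.nonneg hp
  have dim_sup := Submodule.finrank_sup_add_finrank_inf_eq P (LinearMap.ker B)
  rw [P_ker.eq_bot, finrank_bot] at dim_sup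
  have := Submodule.finrank_add_finrank_le_of_disjoint Q_sup
  omega

end Inertia

section MaslovForm

variable {W : Type*} [AddCommGroup W] [Module ℂ W] {f : W →ₗ⋆[ℂ] W →ₗ[ℂ] ℂ}
  {L0 L1 L2 : Submodule ℂ W}

/-- Skew-Hermitian sesquilinear forms: the property of `σ_ℂ` that makes Maslov forms Hermitian. -/
def IsSkewHermitian (f : W →ₗ⋆[ℂ] W →ₗ[ℂ] ℂ) : Prop :=
  ∀ x y, starRingEnd ℂ (f x y) = -f y x

/-- The Maslov form `m(L0, L1, L2)` of a triple with `L0` and `L2` transversal, as a sesquilinear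
form on `L1`: it sends `(v0 + v2, w0 + w2)` to `f v0 w2`. -/
def maslovForm (f : W →ₗ⋆[ℂ] W →ₗ[ℂ] ℂ) (h : IsCompl L0 L2) (L1 : Submodule ℂ W) :
    L1 →ₗ⋆[ℂ] L1 →ₗ[ℂ] ℂ :=
  ((f.comp (L0.projection L2 h)).compl₂ (L2.projection L0 h.symm)).domRestrict₁₂ L1 L1

lemma maslovForm_apply_of_add_eq (h : IsCompl L0 L2) {v w : L1} {v0 v2 w0 w2 : W}
    (hv0 : v0 ∈ L0) (hv2 : v2 ∈ L2) (hw0 : w0 ∈ L0) (hw2 : w2 ∈ L2)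
    (hv : v0 + v2 = v) (hw : w0 + w2 = w) :
    maslovForm f h L1 v w = f v0 w2 := by
  have proj_v : L0.projection L2 h v = v0 := by
    rw [← hv, map_add, Submodule.projection_apply_of_mem_left h hv0,
      (Submodule.projection_apply_eq_zero_iff h).2 hv2, add_zero]
  have proj_w : L2.projection L0 h.symm w = w2 := by
    rw [← hw, map_add, Submodule.projection_apply_of_mem_left h.symm hw2,
      (Submodule.projection_apply_eq_zero_iff h.symm).2 hw0, zero_add]
  change f (L0.projection L2 h v) (L2.projection L0 h.symm w) = _
  rw [proj_v, proj_w]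

lemma maslovForm_apply_eq_of_isotropic (h : IsCompl L0 L2) (h0 : L0 ≤ sesqOrth f L0)
    {v : L1} {v0 v2 : W} (hv0 : v0 ∈ L0) (hv2 : v2 ∈ L2) (hv : v0 + v2 = v) (w : L1) :
    maslovForm f h L1 v w = f v0 w := by
  obtain ⟨w0, w2, hw0, hw2, hw⟩ := Submodule.codisjoint_iff_exists_add_eq.1 h.codisjoint (w : W)
  rw [maslovForm_apply_of_add_eq h hv0 hv2 hw0 hw2 hv hw, ← hw, map_add, h0 hv0 w0 hw0, zero_add]

lemma maslovForm_isSymm (hf : IsSkewHermitian f) (h : IsCompl L0 L2) (h0 : L0 ≤ sesqOrth f L0)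
    (h1 : L1 ≤ sesqOrth f L1) (h2 : L2 ≤ sesqOrth f L2) : (maslovForm f h L1).IsSymm := by
  refine ⟨fun v w => ?_⟩
  obtain ⟨v0, v2, hv0, hv2, hv⟩ := Submodule.codisjoint_iff_exists_add_eq.1 h.codisjoint (v : W)
  obtain ⟨w0, w2, hw0, hw2, hw⟩ := Submodule.codisjoint_iff_exists_add_eq.1 h.codisjoint (w : W)
  rw [maslovForm_apply_of_add_eq h hv0 hv2 hw0 hw2 hv hw,
    maslovForm_apply_of_add_eq h hw0 hw2 hv0 hv2 hw hv, hf]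
  have isotropic : f (w0 + w2) (v0 + v2) = 0 := hw ▸ hv ▸ h1 w.2 v v.2
  simp only [map_add, LinearMap.add_apply, h0 hw0 v0 hv0, h2 hw2 v2 hv2] at isotropic
  linear_combination -isotropic

lemma mem_map_ker_maslovForm (h : IsCompl L0 L2) {v : W} :
    v ∈ (LinearMap.ker (maslovForm f h L1)).map L1.subtype ↔
      v ∈ L1 ∧ ∀ v0 v2, v0 ∈ L0 → v2 ∈ L2 → v = v0 + v2 →
        ∀ w ∈ L1, ∀ w0 w2, w0 ∈ L0 → w2 ∈ L2 → w = w0 + w2 → f v0 w2 = 0 := by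
  constructor
  · rintro ⟨v, hker, rfl⟩
    refine ⟨v.2, fun v0 v2 hv0 hv2 hv w hwL w0 w2 hw0 hw2 hw => ?_⟩
    rw [← maslovForm_apply_of_add_eq h hv0 hv2 hw0 hw2 hv.symm (w := ⟨w, hwL⟩) hw.symm,
      LinearMap.mem_ker.1 hker, LinearMap.zero_apply]
  · rintro ⟨hvL, hker⟩
    refine ⟨⟨v, hvL⟩, LinearMap.ext fun w => ?_, rfl⟩
    obtain ⟨v0, v2, hv0, hv2, hv⟩ := Submodule.codisjoint_iff_exists_add_eq.1 h.codisjoint v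
    obtain ⟨w0, w2, hw0, hw2, hw⟩ := Submodule.codisjoint_iff_exists_add_eq.1 h.codisjoint (w : W)
    rw [maslovForm_apply_of_add_eq h hv0 hv2 hw0 hw2 hv hw]
    exact hker v0 v2 hv0 hv2 hv.symm w w.2 w0 w2 hw0 hw2 hw.symm

lemma map_ker_maslovForm (h : IsCompl L0 L2) (h0 : L0 ≤ sesqOrth f L0)
    (h1 : IsLagrangianC f L1) :
    (LinearMap.ker (maslovForm f h L1)).map L1.subtype = (L0 ⊓ L1) ⊔ (L1 ⊓ L2) := by
  apply le_antisymm
  · rintro _ ⟨v, hker, rfl⟩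
    obtain ⟨v0, v2, hv0, hv2, hv⟩ := Submodule.codisjoint_iff_exists_add_eq.1 h.codisjoint (v : W)
    have hv0L : v0 ∈ L1 := by
      rw [h1]
      intro w hw
      rw [← maslovForm_apply_eq_of_isotropic h h0 hv0 hv2 hv ⟨w, hw⟩,
        LinearMap.mem_ker.1 hker, LinearMap.zero_apply]
    have hv2L : v2 ∈ L1 := by simpa [← hv] using L1.sub_mem v.2 hv0L
    exact Submodule.mem_sup.2 ⟨v0, ⟨hv0, hv0L⟩, v2, ⟨hv2L, hv2⟩, hv⟩
  · intro v hv
    obtain ⟨v0, ⟨hv0, hv0L⟩, v2, ⟨hv2L, hv2⟩, rfl⟩ := Submodule.mem_sup.1 hv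
    refine ⟨⟨v0 + v2, L1.add_mem hv0L hv2L⟩, LinearMap.ext fun w => ?_, rfl⟩
    rw [maslovForm_apply_eq_of_isotropic h h0 hv0 hv2 rfl w]
    exact h1.le hv0L w w.2

lemma finrank_ker_maslovForm [FiniteDimensional ℂ W] (h : IsCompl L0 L2)
    (h0 : L0 ≤ sesqOrth f L0) (h1 : IsLagrangianC f L1) :
    Module.finrank ℂ (LinearMap.ker (maslovForm f h L1)) =
      Module.finrank ℂ ↥(L0 ⊓ L1) + Module.finrank ℂ ↥(L1 ⊓ L2) := by
  have disj : Disjoint (L0 ⊓ L1) (L1 ⊓ L2) := h.disjoint.mono inf_le_left inf_le_right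
  rw [(Submodule.equivMapOfInjective _ L1.injective_subtype _).finrank_eq,
    map_ker_maslovForm h h0 h1, ← Submodule.finrank_sup_add_finrank_inf_eq, disj.eq_bot,
    finrank_bot, add_zero]

lemma maslovPosIndexC_eq_posIndex (h : IsCompl L0 L2) :
    maslovPosIndexC f L0 L1 L2 = posIndex (maslovForm f h L1) := by
  unfold maslovPosIndexC posIndex
  congr 1
  ext d
  rw [h.sup_eq_top, inf_top_eq]
  constructor
  · rintro ⟨S, hSL, hpos, rfl⟩
    refine ⟨S.comap L1.subtype, fun v hv hv0 => ?_,
      (Submodule.comapSubtypeEquivOfLe hSL).finrank_eq⟩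
    obtain ⟨v0, v2, hv0L, hv2L, hv'⟩ :=
      Submodule.codisjoint_iff_exists_add_eq.1 h.codisjoint (v : W)
    rw [maslovForm_apply_of_add_eq h hv0L hv2L hv0L hv2L hv' hv']
    exact hpos v hv (by simpa using hv0) v0 hv0L v2 hv2L hv'.symm
  · rintro ⟨S, hpos, rfl⟩
    refine ⟨S.map L1.subtype, Submodule.map_subtype_le L1 S, ?_,
      (S.equivMapOfInjective _ L1.injective_subtype).finrank_eq.symm⟩
    rintro _ ⟨v, hv, rfl⟩ hv0 v0 hv0L v2 hv2L hv'
    rw [← maslovForm_apply_of_add_eq h hv0L hv2L hv0L hv2L hv'.symm hv'.symm]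
    exact hpos v hv (by simpa using hv0)

lemma maslovIndexC_eq_posIndex_neg (h : IsCompl L0 L2) :
    maslovIndexC f L0 L1 L2 = posIndex (-maslovForm f h L1) := by
  have swap_sign : maslovIndexC f L0 L1 L2 = maslovPosIndexC (-f) L0 L1 L2 := by
    simp [maslovIndexC, maslovPosIndexC]
  rw [swap_sign, maslovPosIndexC_eq_posIndex h]
  rfl

end MaslovForm

section LinearGraphs

lemma isCompl_graph_graph_smul {K M N : Type*} [Field K] [AddCommGroup M] [Module K M]
    [AddCommGroup N] [Module K N] {T : M →ₗ[K] N} {α : K} (hT : Function.Bijective T)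
    (hα : α ≠ 1) : IsCompl T.graph (α • T).graph := by
  refine ⟨Submodule.disjoint_def.2 ?_, Submodule.codisjoint_iff_exists_add_eq.2 ?_⟩
  · rintro ⟨x, y⟩ hT_mem hαT_mem
    have hy : y = T x := hT_mem
    have hy' : y = α • T x := hαT_mem
    have : (1 - α) • T x = 0 := by rw [sub_smul, one_smul, ← hy', ← hy, sub_self]
    have hTx : T x = 0 := (smul_eq_zero.1 this).resolve_left (sub_ne_zero.2 hα.symm)
    simp [hy, hT.1 (hTx.trans T.map_zero.symm)]
  · rintro ⟨x, y⟩
    obtain ⟨a, ha⟩ := hT.2 ((1 - α)⁻¹ • (y - α • T x))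
    have hne : 1 - α ≠ 0 := sub_ne_zero.2 hα.symm
    have one_sub_smul : (1 - α) • T a = y - α • T x := by rw [ha, smul_inv_smul₀ hne]
    refine ⟨(a, T a), (x - a, α • T (x - a)), rfl, rfl, Prod.ext (by simp) ?_⟩
    rw [Prod.snd_add, map_sub, smul_sub,
      show T a + (α • T x - α • T a) = (1 - α) • T a + α • T x by module, one_sub_smul,
      sub_add_cancel]

lemma finrank_graph_inf_prod {R M N : Type*} [Ring R] [AddCommGroup M] [Module R M]
    [AddCommGroup N] [Module R N] {T : M →ₗ[R] N} (hT : Function.Injective T)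
    (P : Submodule R M) (Q : Submodule R N) :
    Module.finrank R ↥(T.graph ⊓ P.prod Q) = Module.finrank R ↥(P.map T ⊓ Q) := by
  have graph_eq : T.graph ⊓ P.prod Q = (P ⊓ Q.comap T).map (LinearMap.id.prod T) := by
    ext ⟨x, y⟩
    constructor
    · rintro ⟨hy, hx, hyQ⟩
      obtain rfl : y = T x := hy
      exact ⟨x, ⟨hx, hyQ⟩, rfl⟩
    · rintro ⟨x, ⟨hx, hTx⟩, hxy⟩
      obtain ⟨rfl, rfl⟩ := Prod.mk.inj hxy
      exact ⟨rfl, hx, hTx⟩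
  have map_eq : P.map T ⊓ Q = (P ⊓ Q.comap T).map T :=
    SetLike.coe_injective (Set.image_inter_preimage T P Q).symm
  rw [graph_eq, map_eq, ← ((P ⊓ Q.comap T).equivMapOfInjective T hT).finrank_eq,
    ← ((P ⊓ Q.comap T).equivMapOfInjective (LinearMap.id.prod T)
      fun x y h => congrArg Prod.fst h).finrank_eq]

lemma finrank_submodule_prod {K M N : Type*} [DivisionRing K] [AddCommGroup M] [Module K M]
    [FiniteDimensional K M] [AddCommGroup N] [Module K N] [FiniteDimensional K N]
    (P : Submodule K M) (Q : Submodule K N) :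
    Module.finrank K (P.prod Q) = Module.finrank K P + Module.finrank K Q := by
  have range_eq : LinearMap.range (P.subtype.prodMap Q.subtype) = P.prod Q := by
    rw [LinearMap.range_prodMap, Submodule.range_subtype, Submodule.range_subtype]
  rw [← range_eq, LinearMap.finrank_range_of_inj
    (P.injective_subtype.prodMap Q.injective_subtype), Module.finrank_prod]

end LinearGraphs

section IsometryGraphs

variable {V V' : Type*} [AddCommGroup V] [Module ℂ V] [AddCommGroup V'] [Module ℂ V']
  {ω : V →ₗ⋆[ℂ] V →ₗ[ℂ] ℂ} {ω' : V' →ₗ⋆[ℂ] V' →ₗ[ℂ] ℂ} {T : V →ₗ[ℂ] V'}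
  {Λ : Submodule ℂ V} {Λ' : Submodule ℂ V'} {α : ℂ}

lemma IsSkewHermitian.neg (h : IsSkewHermitian ω) : IsSkewHermitian (-ω) := fun x y => by
  simp [h x y]

lemma IsSkewHermitian.sesqProd (h : IsSkewHermitian ω) (h' : IsSkewHermitian ω') :
    IsSkewHermitian (sesqProd ω ω') := fun x y => by
  simp [_root_.sesqProd, h x.1 y.1, h' x.2 y.2, add_comm]

lemma IsLagrangianC.neg (h : IsLagrangianC ω Λ) : IsLagrangianC (-ω) Λ := by
  refine h.trans (Submodule.ext fun u => ?_)
  simp [sesqOrth]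

lemma IsLagrangianC.prod (h : IsLagrangianC ω Λ) (h' : IsLagrangianC ω' Λ') :
    IsLagrangianC (sesqProd ω ω') (Λ.prod Λ') := by
  refine le_antisymm (fun u hu w hw => ?_) fun u hu => ⟨?_, ?_⟩
  · simp [sesqProd, h.le hu.1 w.1 hw.1, h'.le hu.2 w.2 hw.2]
  · rw [SetLike.mem_coe, h]
    exact fun x hx => by simpa [sesqProd] using hu (x, 0) ⟨hx, Λ'.zero_mem⟩
  · rw [SetLike.mem_coe, h']
    exact fun y hy => by simpa [sesqProd] using hu (0, y) ⟨Λ.zero_mem, hy⟩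

lemma graph_le_sesqOrth_graph (hT : ∀ x y, ω' (T x) (T y) = ω x y) :
    T.graph ≤ sesqOrth (sesqProd (-ω) ω') T.graph := by
  intro v hv w hw
  rw [LinearMap.mem_graph_iff] at hv hw
  simp [sesqProd, hv, hw, hT]

lemma apply_smul_apply_smul_of_norm_eq_one (hα : ‖α‖ = 1)
    (hT : ∀ x y, ω' (T x) (T y) = ω x y) (x y : V) :
    ω' ((α • T) x) ((α • T) y) = ω x y := by
  have : α * starRingEnd ℂ α = 1 := by rw [RCLike.mul_conj, hα]; simp
  simp [hT, LinearMap.map_smulₛₗ, ← mul_assoc, this]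

lemma maslovForm_graph_smul_apply (hT : ∀ x y, ω' (T x) (T y) = ω x y)
    (h : IsCompl T.graph (α • T).graph) (hα : α ≠ 1) {L : Submodule ℂ (V × V')} (v w : L) :
    maslovForm (sesqProd (-ω) ω') h L v w =
      starRingEnd ℂ (1 - α)⁻¹ * ω' (v.1.2 - α • T v.1.1) (w.1.2 - T w.1.1) := by
  obtain ⟨v0, v2, hv0, hv2, hv⟩ :=
    Submodule.codisjoint_iff_exists_add_eq.1 h.codisjoint (v : V × V')
  rw [maslovForm_apply_eq_of_isotropic h (graph_le_sesqOrth_graph hT) hv0 hv2 hv]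
  rw [LinearMap.mem_graph_iff] at hv0 hv2
  have snd_sub : v.1.2 - α • T v.1.1 = (1 - α) • T v0.1 := by
    rw [← hv, Prod.snd_add, Prod.fst_add, hv0, hv2, LinearMap.smul_apply, map_add]
    module
  have hne : starRingEnd ℂ (1 - α) ≠ 0 := (map_ne_zero _).2 (sub_ne_zero.2 hα.symm)
  rw [snd_sub, LinearMap.map_smulₛₗ, LinearMap.smul_apply, smul_eq_mul, map_inv₀,
    inv_mul_cancel_left₀ hne, map_sub, hT]
  simp only [sesqProd, LinearMap.mk₂'ₛₗ_apply, LinearMap.neg_apply, hv0]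
  ring

lemma posIndex_neg_maslovForm_graph_smul [FiniteDimensional ℂ V] [FiniteDimensional ℂ V']
    (hT : ∀ x y, ω' (T x) (T y) = ω x y) (h : IsCompl T.graph (α • T).graph) (hα : α ≠ 1)
    (hΛ : Λ ≤ sesqOrth ω Λ) (hΛ' : Λ' ≤ sesqOrth ω' Λ') :
    posIndex (-maslovForm (sesqProd (-ω) ω') h (Λ.prod Λ')) =
      posIndex (maslovForm (sesqProd (-ω) ω') h (Λ.prod Λ')) := by
  let flip : V × V' →ₗ[ℂ] V × V' := (-LinearMap.id).prodMap LinearMap.id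
  have flip_mem : ∀ v ∈ Λ.prod Λ', flip v ∈ Λ.prod Λ' := fun v hv => ⟨Λ.neg_mem hv.1, hv.2⟩
  have flip_injective : Function.Injective flip :=
    Function.Injective.prodMap neg_injective Function.injective_id
  refine posIndex_neg_eq_of_anti_isometry (φ := flip.restrict flip_mem)
    (fun v w hvw => Subtype.ext (flip_injective (congrArg Subtype.val hvw))) ?_
  rintro ⟨⟨x, y⟩, hx, hy⟩
  have hTx : ω' (T x) (T x) = 0 := (hT x x).trans (hΛ hx x hx)
  have hyy : ω' y y = 0 := hΛ' hy y hy
  simp only [maslovForm_graph_smul_apply hT h hα]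
  simp only [flip, LinearMap.coe_restrict_apply, LinearMap.prodMap_apply, LinearMap.neg_apply,
    LinearMap.id_coe, id_eq, map_neg, smul_neg, sub_neg_eq_add, map_add, map_sub,
    LinearMap.add_apply, LinearMap.sub_apply, LinearMap.map_smulₛₗ, LinearMap.smul_apply,
    smul_eq_mul, hTx, hyy]
  ring

end IsometryGraphs

theorem maslov_index_graphs_vertical_general {V : Type*} [AddCommGroup V] [Module ℂ V]
    [FiniteDimensional ℂ V] {ω : V →ₗ⋆[ℂ] V →ₗ[ℂ] ℂ} (hω : IsSkewHermitian ω)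
    {T : V →ₗ[ℂ] V} (hT : Function.Injective T) (hTω : ∀ x y, ω (T x) (T y) = ω x y)
    {Λ : Submodule ℂ V} (hΛ : IsLagrangianC ω Λ) {α : ℂ} (hα : ‖α‖ = 1) (hα1 : α ≠ 1) :
    (T.graph ⊔ (α • T).graph = ⊤) ∧
    (∃ K : Submodule ℂ (V × V), K ≤ Λ.prod Λ ∧
      (∀ v, v ∈ K ↔ v ∈ Λ.prod Λ ∧
        ∀ v0 v2, v0 ∈ T.graph → v2 ∈ (α • T).graph → v = v0 + v2 →
          ∀ w ∈ Λ.prod Λ, ∀ w0 w2, w0 ∈ T.graph → w2 ∈ (α • T).graph → w = w0 + w2 →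
            sesqProd (-ω) ω v0 w2 = 0) ∧
      Module.finrank ℂ K = 2 * Module.finrank ℂ ↥(Λ.map T ⊓ Λ)) ∧
    maslovPosIndexC (sesqProd (-ω) ω) T.graph (Λ.prod Λ) (α • T).graph
      = maslovIndexC (sesqProd (-ω) ω) T.graph (Λ.prod Λ) (α • T).graph ∧
    (maslovIndexC (sesqProd (-ω) ω) T.graph (Λ.prod Λ) (α • T).graph : ℤ)
      = (Module.finrank ℂ Λ : ℤ) - (Module.finrank ℂ ↥(Λ.map T ⊓ Λ) : ℤ) := by
  have h : IsCompl T.graph (α • T).graph :=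
    isCompl_graph_graph_smul ⟨hT, LinearMap.injective_iff_surjective.1 hT⟩ hα1
  have hα0 : α ≠ 0 := norm_ne_zero_iff.1 (hα ▸ one_ne_zero)
  have isotropic := graph_le_sesqOrth_graph hTω
  have lagrangian := hΛ.neg.prod hΛ
  have symm := maslovForm_isSymm (hω.neg.sesqProd hω) h isotropic lagrangian.le
    (graph_le_sesqOrth_graph (apply_smul_apply_smul_of_norm_eq_one hα hTω))
  have dim_ker : Module.finrank ℂ (LinearMap.ker (maslovForm (sesqProd (-ω) ω) h (Λ.prod Λ)))
      = 2 * Module.finrank ℂ ↥(Λ.map T ⊓ Λ) := by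
    rw [finrank_ker_maslovForm h isotropic lagrangian, inf_comm (Λ.prod Λ),
      finrank_graph_inf_prod hT,
      finrank_graph_inf_prod (T := α • T) ((smul_right_injective V hα0).comp hT),
      Submodule.map_smul T Λ α hα0, two_mul]
  have zero_signature := posIndex_neg_maslovForm_graph_smul hTω h hα1 hΛ.le hΛ.le
  have sylvester := posIndex_add_posIndex_neg_add_finrank_ker symm
  rw [dim_ker, zero_signature, finrank_submodule_prod] at sylvester
  rw [maslovPosIndexC_eq_posIndex h, maslovIndexC_eq_posIndex_neg h, zero_signature]
  refine ⟨h.sup_eq_top, ⟨_, Submodule.map_subtype_le _ _, fun v => mem_map_ker_maslovForm h, ?_⟩,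
    rfl, by omega⟩
  rw [← dim_ker]
  exact (Submodule.equivMapOfInjective _ (Λ.prod Λ).injective_subtype _).finrank_eq.symm

section StandardForm

variable {n : ℕ} {Θ : Matrix (Fin n ⊕ Fin n) (Fin n ⊕ Fin n) ℝ}

lemma sigmaC_isSkewHermitian (n : ℕ) : IsSkewHermitian (sigmaC n) := fun x y => by
  simp [sigmaC, mul_comm]

lemma sigmaC_eq_neg_dotProduct (x y : CV n) :
    sigmaC n x y = -(star x ⬝ᵥ (Matrix.J (Fin n) ℂ).mulVec y) := by
  simp only [sigmaC, LinearMap.mk₂'ₛₗ_apply, dotProduct, Pi.star_apply, RCLike.star_def, Matrix.J,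
    Matrix.fromBlocks_mulVec, Matrix.zero_mulVec, Matrix.neg_mulVec, Matrix.one_mulVec, zero_add,
    add_zero, Fintype.sum_sum_type, Sum.elim_inl, Sum.elim_inr, Pi.neg_apply, Function.comp_apply,
    mul_neg, Finset.sum_neg_distrib, neg_add_rev, neg_neg]
  ring

lemma sigmaC_cAction (hΘ : Θ ∈ Matrix.symplecticGroup (Fin n) ℝ) (x y : CV n) :
    sigmaC n (cAction Θ x) (cAction Θ y) = sigmaC n x y := by
  have complexified := SymplecticGroup.mem_iff'.1 (SymplecticGroup.map_mem hΘ Complex.ofRealHom)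
  have real_entries : (Θ.map Complex.ofRealHom).conjTranspose =
      (Θ.map Complex.ofRealHom).transpose := by
    ext i j; simp
  change sigmaC n ((Θ.map Complex.ofRealHom).mulVec x) ((Θ.map Complex.ofRealHom).mulVec y) = _
  rw [sigmaC_eq_neg_dotProduct, Matrix.star_mulVec, ← Matrix.dotProduct_mulVec,
    Matrix.mulVec_mulVec, Matrix.mulVec_mulVec, real_entries, complexified,
    ← sigmaC_eq_neg_dotProduct]

lemma cAction_injective (hΘ : Θ ∈ Matrix.symplecticGroup (Fin n) ℝ) :
    Function.Injective (cAction Θ) :=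
  Matrix.mulVec_injective_of_det_ne_zero
    (SymplecticGroup.symplectic_det (SymplecticGroup.map_mem hΘ Complex.ofRealHom)).ne_zero

lemma PiV_isLagrangianC (n : ℕ) : IsLagrangianC (sigmaC n) (PiV n) := by
  refine le_antisymm (fun u hu w hw => ?_) fun u hu i => ?_
  · simp [sigmaC, hu _, hw _]
  · simpa [sigmaC, Pi.single_apply] using
      hu (Pi.single (Sum.inl i) 1) fun j => Pi.single_eq_of_ne Sum.inr_ne_inl 1

lemma finrank_PiV (n : ℕ) : Module.finrank ℂ (PiV n) = n := by
  let restrict : CV n →ₗ[ℂ] (Fin n → ℂ) := LinearMap.funLeft ℂ ℂ Sum.inr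
  have ker_eq : LinearMap.ker restrict = PiV n := by
    ext x
    exact funext_iff
  have := restrict.finrank_range_add_finrank_ker
  rw [ker_eq, LinearMap.range_eq_top.2
    (LinearMap.funLeft_surjective_of_injective ℂ ℂ _ Sum.inr_injective), finrank_top] at this
  simpa using this

end StandardForm

/-- for `|α| = 1`, `α ≠ 1`, the Lagrangian subspaces `Γ(Θ)` and `Γ(αΘ)`
are transversal, the Maslov form `m(Γ(Θ), Π², Γ(αΘ))` (defined on `Π²`) has zero
signature and kernel of complex dimension `2·dim(Θ(Π) ∩ Π)`, and
`i(Γ(Θ), Π², Γ(αΘ)) = n − dim(Θ(Π) ∩ Π)`. -/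
theorem maslov_index_graphs_vertical
    (n : ℕ) (Θ : Matrix (Fin n ⊕ Fin n) (Fin n ⊕ Fin n) ℝ)
    (hΘ : Θ.transpose * symplJ n * Θ = symplJ n)
    (α : ℂ) (hα : ‖α‖ = 1) (hα1 : α ≠ 1) :
    (LinearMap.graph (cAction Θ) ⊔ LinearMap.graph (α • cAction Θ) = ⊤) ∧
    (∃ K : Submodule ℂ (CV n × CV n), K ≤ Pi2Sub n ∧
      (∀ v, v ∈ K ↔ v ∈ Pi2Sub n ∧
        ∀ v0 v2, v0 ∈ LinearMap.graph (cAction Θ) → v2 ∈ LinearMap.graph (α • cAction Θ) →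
          v = v0 + v2 →
          ∀ w ∈ Pi2Sub n,
            ∀ w0 w2, w0 ∈ LinearMap.graph (cAction Θ) →
              w2 ∈ LinearMap.graph (α • cAction Θ) → w = w0 + w2 →
              sigma2C n v0 w2 = 0) ∧
      Module.finrank ℂ ↥K
        = 2 * Module.finrank ℂ ↥(Submodule.map (cAction Θ) (PiV n) ⊓ PiV n)) ∧
    maslovPosIndexC (sigma2C n) (LinearMap.graph (cAction Θ)) (Pi2Sub n)
        (LinearMap.graph (α • cAction Θ))
      = maslovIndexC (sigma2C n) (LinearMap.graph (cAction Θ)) (Pi2Sub n)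
          (LinearMap.graph (α • cAction Θ)) ∧
    (maslovIndexC (sigma2C n) (LinearMap.graph (cAction Θ)) (Pi2Sub n)
        (LinearMap.graph (α • cAction Θ)) : ℤ)
      = (n : ℤ)
        - (Module.finrank ℂ ↥(Submodule.map (cAction Θ) (PiV n) ⊓ PiV n) : ℤ) := by
  have symplectic : Θ ∈ Matrix.symplecticGroup (Fin n) ℝ := SymplecticGroup.mem_iff'.2 hΘ
  have general := maslov_index_graphs_vertical_general (sigmaC_isSkewHermitian n)
    (cAction_injective symplectic) (sigmaC_cAction symplectic) (PiV_isLagrangianC n) hα hα1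
  rwa [finrank_PiV] at general

end
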